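/- When f = 0, the second-order pressure-correction DRLM scheme (P-DRLM2) is unconditionally stable in the sense that, for every n = 2, …, N and every τ > 0: (3/2)K(uⁿ⁺¹,pⁿ⁺¹) − (1/2)K(uⁿ,pⁿ) + θ[(3/2)(Qⁿ⁺¹)² − (1/2)(Qⁿ)² − 1] ≤ (3/2)K(uⁿ,pⁿ) − (1/2)K(uⁿ⁻¹,pⁿ⁻¹) + θ[(3/2)(Qⁿ)² − (1/2)(Qⁿ⁻¹)² − 1]. -/

import Mathlib

open MeasureTheory Real
open scoped RealInnerProductSpace

noncomputable section

/-- Euclidean space `ℝ^d`. -/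
abbrev Euc (d : ℕ) := EuclideanSpace ℝ (Fin d)

/-- Partial derivative of a scalar field in the `j`-th coordinate direction. -/
def pder {d : ℕ} (j : Fin d) (f : Euc d → ℝ) (x : Euc d) : ℝ :=
  fderiv ℝ f x (EuclideanSpace.single j 1)

/-- Gradient of a scalar field. -/
def grd {d : ℕ} (f : Euc d → ℝ) (x : Euc d) : Euc d :=
  (WithLp.equiv 2 (Fin d → ℝ)).symm fun j => pder j f x

/-- Laplacian of a scalar field. -/
def lap {d : ℕ} (f : Euc d → ℝ) (x : Euc d) : ℝ :=
  ∑ j, pder j (fun y => pder j f y) x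

/-- Componentwise Laplacian of a vector field. -/
def vlap {d : ℕ} (u : Euc d → Euc d) (x : Euc d) : Euc d :=
  (WithLp.equiv 2 (Fin d → ℝ)).symm fun i => lap (fun y => u y i) x

/-- Divergence of a vector field. -/
def divg {d : ℕ} (u : Euc d → Euc d) (x : Euc d) : ℝ :=
  ∑ j, pder j (fun y => u y j) x

/-- Convection term `(u·∇)v`. -/
def conv {d : ℕ} (u v : Euc d → Euc d) (x : Euc d) : Euc d :=
  (WithLp.equiv 2 (Fin d → ℝ)).symm fun i => ∑ j, u x j * pder j (fun y => v y i) x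

/-- `L²(Ω)` inner product of vector fields. -/
def ipL2 {d : ℕ} (Ω : Set (Euc d)) (u v : Euc d → Euc d) : ℝ :=
  ∫ x in Ω, ⟪u x, v x⟫

/-- Squared `L²(Ω)` norm of a vector field. -/
def nsq {d : ℕ} (Ω : Set (Euc d)) (u : Euc d → Euc d) : ℝ :=
  ∫ x in Ω, ‖u x‖ ^ 2

/-- Squared `L²(Ω)` norm of the gradient of a scalar field. -/
def gnsq {d : ℕ} (Ω : Set (Euc d)) (p : Euc d → ℝ) : ℝ :=
  ∫ x in Ω, ‖grd p x‖ ^ 2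

/-- Squared `L²(Ω)` norm of the gradient of a vector field. -/
def vgnsq {d : ℕ} (Ω : Set (Euc d)) (u : Euc d → Euc d) : ℝ :=
  ∫ x in Ω, ∑ i, ‖grd (fun y => u y i) x‖ ^ 2

/-- `(∇p, v)` in `L²(Ω)`. -/
def ipGrad {d : ℕ} (Ω : Set (Euc d)) (p : Euc d → ℝ) (v : Euc d → Euc d) : ℝ :=
  ∫ x in Ω, ⟪grd p x, v x⟫

/-- `(∇p, ∇q)` in `L²(Ω)`. -/
def ipGG {d : ℕ} (Ω : Set (Euc d)) (p q : Euc d → ℝ) : ℝ :=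
  ∫ x in Ω, ⟪grd p x, grd q x⟫

/-- `(∇u, ∇v)` in `L²(Ω)` for vector fields. -/
def ipVG {d : ℕ} (Ω : Set (Euc d)) (u v : Euc d → Euc d) : ℝ :=
  ∫ x in Ω, ∑ i, ⟪grd (fun y => u y i) x, grd (fun y => v y i) x⟫

/-- Trilinear form `b(u,v,w) = ∫_Ω ((u·∇)v)·w`. -/
def triB {d : ℕ} (Ω : Set (Euc d)) (u v w : Euc d → Euc d) : ℝ :=
  ∫ x in Ω, ⟪conv u v x, w x⟫

/-- Discrete energy `K(u,p) = ½(‖u‖² + τ²‖∇p‖²)`. -/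
def Ke {d : ℕ} (Ω : Set (Euc d)) (τ : ℝ) (u : Euc d → Euc d) (p : Euc d → ℝ) : ℝ :=
  (1/2) * (nsq Ω u + τ^2 * gnsq Ω p)

/-- Squared `H¹(Ω)` norm of a vector field. -/
def h1sq {d : ℕ} (Ω : Set (Euc d)) (u : Euc d → Euc d) : ℝ :=
  nsq Ω u + vgnsq Ω u

/-- Squared `H²(Ω)` norm of a vector field. -/
def h2sq {d : ℕ} (Ω : Set (Euc d)) (u : Euc d → Euc d) : ℝ :=
  h1sq Ω u + ∫ x in Ω, ∑ i, ∑ j, ∑ k,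
    (pder k (fun y => pder j (fun z => u z i) y) x) ^ 2

/-- `H⁻¹(Ω)` norm, defined by duality against `H¹₀(Ω)` vector fields. -/
def negNorm {d : ℕ} (Ω : Set (Euc d)) (f : Euc d → Euc d) : ℝ :=
  sSup {r : ℝ | ∃ v : Euc d → Euc d, (∀ x ∈ frontier Ω, v x = 0) ∧
    r = (∫ x in Ω, ⟪f x, v x⟫) / Real.sqrt (vgnsq Ω v)}

/-- One step of the second-order pressure-correction DRLM scheme (P-DRLM2):
from `(uⁿ⁻¹, pⁿ⁻¹, Qⁿ⁻¹)` and `(uⁿ, pⁿ, Qⁿ)` the quadruple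
`(ûⁿ⁺¹, uⁿ⁺¹, pⁿ⁺¹, Qⁿ⁺¹)` satisfies the BDF2 prediction step (with
`ũⁿ⁺¹ = 2uⁿ − uⁿ⁻¹` and no external force), the projection step,
incompressibility (with vanishing normal trace, `nrm` being the outward
normal of `Ω`), and the BDF2 multiplier energy equation. -/
def PDRLM2 {d : ℕ} (Ω : Set (Euc d)) (ν τ θ : ℝ)
    (um u : Euc d → Euc d) (pm p : Euc d → ℝ) (Qm Qn : ℝ)
    (uh u' : Euc d → Euc d) (p' : Euc d → ℝ) (Q' : ℝ)
    (nrm : Euc d → Euc d) : Prop :=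
  (∀ x ∈ Ω, (1/(2*τ)) • ((3:ℝ) • uh x - (4:ℝ) • u x + um x)
      + Q' • conv (fun y => (2:ℝ) • u y - um y) (fun y => (2:ℝ) • u y - um y) x
      + grd p x - ν • vlap uh x = 0) ∧
  (∀ x ∈ frontier Ω, uh x = 0) ∧
  (∀ x ∈ Ω, (1/(2*τ)) • ((3:ℝ) • u' x - (3:ℝ) • uh x)
      + grd (fun y => p' y - p y + ν * divg uh y) x = 0) ∧
  (∀ x ∈ Ω, divg u' x = 0) ∧
  (∀ x ∈ frontier Ω, ⟪u' x, nrm x⟫ = 0) ∧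
  ((3 * Ke Ω τ u' p' - 4 * Ke Ω τ u p + Ke Ω τ um pm) / (2*τ)
      + θ * (3 * Q' ^ 2 - 4 * Qn ^ 2 + Qm ^ 2) / (2*τ)
    = ipL2 Ω (fun x => (1/(2*τ)) • ((3:ℝ) • uh x - (4:ℝ) • u x + um x)) uh
      + (Q' * triB Ω (fun y => (2:ℝ) • u y - um y) (fun y => (2:ℝ) • u y - um y) uh
         + ipGrad Ω p uh))

/-- A smooth function of `t` vanishing for `|t| ≤ ε` and equal to `t` for `2 ε² ≤ t²`. -/
def cutId (ε t : ℝ) : ℝ := t * smoothTransition (t ^ 2 / ε ^ 2 - 1)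

lemma contDiff_cutId (ε : ℝ) : ContDiff ℝ (⊤ : ℕ∞) (cutId ε) := by
  unfold cutId
  exact contDiff_id.mul (smoothTransition.contDiff.comp (by fun_prop))

lemma cutId_eq_zero {ε t : ℝ} (hε : 0 < ε) (ht : |t| ≤ ε) : cutId ε t = 0 := by
  have h : t ^ 2 / ε ^ 2 ≤ 1 := by
    rw [div_le_one (by positivity), ← sq_abs t]
    gcongr
  simp [cutId, smoothTransition.zero_of_nonpos (sub_nonpos.2 h)]

lemma cutId_eq_self {ε t : ℝ} (hε : 0 < ε) (ht : 2 * ε ^ 2 ≤ t ^ 2) : cutId ε t = t := by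
  have h : 2 ≤ t ^ 2 / ε ^ 2 := by rwa [le_div_iff₀ (by positivity)]
  simp [cutId, smoothTransition.one_of_one_le (by linarith : 1 ≤ t ^ 2 / ε ^ 2 - 1)]

lemma abs_cutId_le (ε t : ℝ) : |cutId ε t| ≤ |t| := by
  rw [cutId, abs_mul, abs_of_nonneg (smoothTransition.nonneg _)]
  exact mul_le_of_le_one_right (abs_nonneg t) (smoothTransition.le_one _)

lemma deriv_cutId_nonneg (ε t : ℝ) : 0 ≤ deriv (cutId ε) t := by
  have hs : DifferentiableAt ℝ smoothTransition (t ^ 2 / ε ^ 2 - 1) :=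
    (smoothTransition.contDiff (n := 1)).differentiable (by simp) _
  have hin : HasDerivAt (fun t : ℝ => t ^ 2 / ε ^ 2 - 1) (2 * t / ε ^ 2) t := by
    simpa using ((hasDerivAt_pow 2 t).div_const (ε ^ 2)).sub_const 1
  have h : HasDerivAt (cutId ε) _ t :=
    (hasDerivAt_id t).mul (HasDerivAt.comp (h₂ := smoothTransition) t hs.hasDerivAt hin)
  rw [h.deriv]
  have h1 : 0 ≤ deriv smoothTransition (t ^ 2 / ε ^ 2 - 1) := smoothTransition.monotone.deriv_nonneg
  have h2 := smoothTransition.nonneg (t ^ 2 / ε ^ 2 - 1)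
  have h3 : 0 ≤ deriv smoothTransition (t ^ 2 / ε ^ 2 - 1) * (t ^ 2 / ε ^ 2) := by positivity
  simp only [id]
  linear_combination h2 + 2 * h3

lemma Continuous.integrableOn_of_isBounded {d : ℕ} {Ω : Set (Euc d)} (hΩ : Bornology.IsBounded Ω)
    {f : Euc d → ℝ} (hf : Continuous f) : IntegrableOn f Ω :=
  (hf.continuousOn.integrableOn_compact hΩ.isCompact_closure).mono_set subset_closure

lemma contDiff_pder {d : ℕ} (j : Fin d) {f : Euc d → ℝ} (hf : ContDiff ℝ (⊤ : ℕ∞) f) :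
    ContDiff ℝ (⊤ : ℕ∞) (pder j f) :=
  (hf.fderiv_right (by simp)).clm_apply contDiff_const

lemma contDiff_component {d : ℕ} {u : Euc d → Euc d} (hu : ContDiff ℝ (⊤ : ℕ∞) u) (i : Fin d) :
    ContDiff ℝ (⊤ : ℕ∞) (fun x => u x i) :=
  contDiff_euclidean.1 hu i

lemma continuous_grd {d : ℕ} {f : Euc d → ℝ} (hf : ContDiff ℝ (⊤ : ℕ∞) f) : Continuous (grd f) :=
  (PiLp.continuous_toLp 2 _).comp <| continuous_pi fun j => (contDiff_pder j hf).continuous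

lemma continuous_conv {d : ℕ} {u v : Euc d → Euc d} (hu : ContDiff ℝ (⊤ : ℕ∞) u)
    (hv : ContDiff ℝ (⊤ : ℕ∞) v) : Continuous (conv u v) :=
  (PiLp.continuous_toLp 2 _).comp <| continuous_pi fun i => continuous_finsetSum _ fun j _ =>
    (contDiff_component hu j).continuous.mul (contDiff_pder j (contDiff_component hv i)).continuous

/-- Extending by zero a truncation of a function that vanishes on `∂Ω` gives a function that is
near every point either the truncation itself or zero. -/
lemma indicator_cutId_eventuallyEq {d : ℕ} {Ω : Set (Euc d)} (hΩ : IsOpen Ω) {w : Euc d → ℝ}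
    (hw : Continuous w) (hw0 : ∀ x ∈ frontier Ω, w x = 0) {ε : ℝ} (hε : 0 < ε) (x : Euc d) :
    (x ∈ Ω → Ω.indicator (cutId ε ∘ w) =ᶠ[nhds x] cutId ε ∘ w) ∧
      (x ∉ Ω → Ω.indicator (cutId ε ∘ w) =ᶠ[nhds x] 0) := by
  constructor <;> intro hx
  · filter_upwards [hΩ.mem_nhds hx] with y hy
    simp [hy]
  · by_cases hc : x ∈ closure Ω
    · have hwx := hw0 x (by rw [hΩ.frontier_eq]; exact ⟨hc, hx⟩)
      have h : ∀ᶠ y in nhds x, |w y| < ε :=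
        hw.abs.continuousAt.eventually_lt continuousAt_const (by simpa [hwx] using hε)
      filter_upwards [h] with y hy
      by_cases hyΩ : y ∈ Ω
      · simp [hyΩ, cutId_eq_zero hε hy.le]
      · simp [hyΩ]
    · filter_upwards [isClosed_closure.isOpen_compl.mem_nhds hc] with y hy
      exact Set.indicator_of_notMem (fun h => hy (subset_closure h)) _

lemma setIntegral_cutId_mul_pder_pder_nonpos {d : ℕ} {Ω : Set (Euc d)} (hΩ : IsOpen Ω)
    (hb : Bornology.IsBounded Ω) {w : Euc d → ℝ} (hw : ContDiff ℝ (⊤ : ℕ∞) w)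
    (hw0 : ∀ x ∈ frontier Ω, w x = 0) {ε : ℝ} (hε : 0 < ε) (j : Fin d) :
    ∫ x in Ω, cutId ε (w x) * pder j (pder j w) x ≤ 0 := by
  set g := Ω.indicator (cutId ε ∘ w) with hg
  have hev := indicator_cutId_eventuallyEq hΩ hw.continuous hw0 hε
  have hφw : ContDiff ℝ (⊤ : ℕ∞) (cutId ε ∘ w) := (contDiff_cutId ε).comp hw
  have hgs : ContDiff ℝ (⊤ : ℕ∞) g := by
    rw [contDiff_iff_contDiffAt]
    intro x
    by_cases hx : x ∈ Ω
    · exact hφw.contDiffAt.congr_of_eventuallyEq ((hev x).1 hx)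
    · exact contDiffAt_const.congr_of_eventuallyEq ((hev x).2 hx)
  have hgc : HasCompactSupport g :=
    hb.isCompact_closure.of_isClosed_subset (isClosed_tsupport g)
      (closure_mono (Set.support_indicator_subset))
  have hpd := contDiff_pder j hw
  have hg' : Continuous fun x => fderiv ℝ g x (EuclideanSpace.single j 1) :=
    (contDiff_pder j hgs).continuous
  have hg'c : HasCompactSupport fun x => fderiv ℝ g x (EuclideanSpace.single j 1) :=
    hgc.fderiv_apply ℝ _
  have ibp := integral_mul_fderiv_eq_neg_fderiv_mul_of_integrable (𝕜 := ℝ) (μ := volume)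
    (v := EuclideanSpace.single j (1 : ℝ)) (f := g) (g := pder j w)
    ((hg'.mul hpd.continuous).integrable_of_hasCompactSupport hg'c.mul_right)
    ((hgs.continuous.mul (contDiff_pder j hpd).continuous).integrable_of_hasCompactSupport
      hgc.mul_right)
    ((hgs.continuous.mul hpd.continuous).integrable_of_hasCompactSupport hgc.mul_right)
    (fun x _ => hgs.differentiable (by simp) x) (fun x _ => hpd.differentiable (by simp) x)
  have hlhs : ∫ x in Ω, cutId ε (w x) * pder j (pder j w) x
      = ∫ x, g x * fderiv ℝ (pder j w) x (EuclideanSpace.single j 1) := by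
    rw [← integral_indicator hΩ.measurableSet]
    congr 1 with x
    by_cases hx : x ∈ Ω <;> simp [hg, hx, pder]
  rw [hlhs, ibp, neg_nonpos]
  refine integral_nonneg fun x => ?_
  by_cases hx : x ∈ Ω
  · have hd : fderiv ℝ g x = deriv (cutId ε) (w x) • fderiv ℝ w x := by
      rw [((hev x).1 hx).fderiv_eq]
      exact (((contDiff_cutId ε).differentiable (by simp) (w x)).hasDerivAt.comp_hasFDerivAt x
        (hw.differentiable (by simp) x).hasFDerivAt).fderiv
    simp only [hd, pder, smul_apply, smul_eq_mul, Pi.zero_apply, mul_assoc]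
    exact mul_nonneg (deriv_cutId_nonneg _ _) (mul_self_nonneg _)
  · have hd : fderiv ℝ g x = 0 := by simpa using ((hev x).2 hx).fderiv_eq
    simp [hd]

/-- On a bounded open set without any boundary regularity, a smooth function vanishing on the
boundary satisfies `∫ w ∂ⱼ²w ≤ 0`. -/
lemma setIntegral_mul_pder_pder_nonpos {d : ℕ} {Ω : Set (Euc d)} (hΩ : IsOpen Ω)
    (hb : Bornology.IsBounded Ω) {w : Euc d → ℝ} (hw : ContDiff ℝ (⊤ : ℕ∞) w)
    (hw0 : ∀ x ∈ frontier Ω, w x = 0) (j : Fin d) :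
    ∫ x in Ω, w x * pder j (pder j w) x ≤ 0 := by
  have hw2 := (contDiff_pder j (contDiff_pder j hw)).continuous
  refine le_of_tendsto (f := fun ε : ℝ => ∫ x in Ω, cutId ε (w x) * pder j (pder j w) x)
    (x := nhdsWithin 0 (Set.Ioi 0)) ?_
    (eventually_nhdsWithin_of_forall fun ε hε =>
      setIntegral_cutId_mul_pder_pder_nonpos hΩ hb hw hw0 hε j)
  refine tendsto_integral_filter_of_dominated_convergence
    (fun x => |w x * pder j (pder j w) x|) ?_ ?_ ?_ ?_
  · exact Filter.Eventually.of_forall fun ε =>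
      (((contDiff_cutId ε).continuous.comp hw.continuous).mul hw2).aestronglyMeasurable
  · refine Filter.Eventually.of_forall fun ε => Filter.Eventually.of_forall fun x => ?_
    rw [Real.norm_eq_abs, abs_mul, abs_mul]
    exact mul_le_mul_of_nonneg_right (abs_cutId_le _ _) (abs_nonneg _)
  · exact (hw.continuous.mul hw2).abs.integrableOn_of_isBounded hb
  · refine Filter.Eventually.of_forall fun x => tendsto_nhds_of_eventually_eq ?_
    by_cases hx : w x = 0
    · simp [hx, cutId]
    · have h : ∀ᶠ ε : ℝ in nhds 0, 2 * ε ^ 2 < w x ^ 2 :=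
        (by fun_prop : ContinuousAt (fun ε : ℝ => 2 * ε ^ 2) 0).eventually_lt continuousAt_const
          (by simpa using pow_pos (abs_pos.2 hx) 2)
      filter_upwards [h.filter_mono nhdsWithin_le_nhds, self_mem_nhdsWithin] with ε h1 h2
      rw [cutId_eq_self h2 h1.le]

lemma setIntegral_inner_vlap_nonpos {d : ℕ} {Ω : Set (Euc d)} (hΩ : IsOpen Ω)
    (hb : Bornology.IsBounded Ω) {u : Euc d → Euc d} (hu : ContDiff ℝ (⊤ : ℕ∞) u)
    (hu0 : ∀ x ∈ frontier Ω, u x = 0) :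
    ∫ x in Ω, ⟪vlap u x, u x⟫ ≤ 0 := by
  have hc := contDiff_component hu
  have h : ∀ x, ⟪vlap u x, u x⟫
      = ∑ i, ∑ j, u x i * pder j (pder j fun y => u y i) x := by
    intro x
    simp [PiLp.inner_apply, vlap, lap, Finset.mul_sum]
  simp only [h]
  have hint : ∀ i j, IntegrableOn (fun x => u x i * pder j (pder j fun y => u y i) x) Ω :=
    fun i j => ((hc i).continuous.mul
      (contDiff_pder j (contDiff_pder j (hc i))).continuous).integrableOn_of_isBounded hb
  rw [integral_finsetSum _ fun i _ => integrable_finsetSum _ fun j _ => hint i j]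
  refine Finset.sum_nonpos fun i _ => ?_
  rw [integral_finsetSum _ fun j _ => hint i j]
  exact Finset.sum_nonpos fun j _ =>
    setIntegral_mul_pder_pder_nonpos hΩ hb (hc i) (fun x hx => by simp [hu0 x hx]) j

/-- with `f = 0`, the second-order pressure-correction DRLM scheme
(P-DRLM2) is unconditionally stable. -/
theorem pdrlm2_unconditional_energy_stability
    {d : ℕ} (hd : d = 2 ∨ d = 3)
    (Ω : Set (Euc d)) (hΩo : IsOpen Ω) (hΩb : Bornology.IsBounded Ω) (hΩne : Ω.Nonempty)
    (ν : ℝ) (hν : ν ∈ Set.Ioo (0:ℝ) 1)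
    (T : ℝ) (hT : 0 < T) (N : ℕ) (hN : 0 < N) (τ : ℝ) (hτ : τ = T / N) (hτpos : 0 < τ)
    (θ : ℝ) (hθ : 0 < θ)
    (U Uh : ℕ → Euc d → Euc d) (P : ℕ → Euc d → ℝ) (Q : ℕ → ℝ)
    (nrm : Euc d → Euc d)
    -- smoothness of the discrete fields
    (hsU : ∀ n, ContDiff ℝ (⊤ : ℕ∞) (U n)) (hsUh : ∀ n, ContDiff ℝ (⊤ : ℕ∞) (Uh n))
    (hsP : ∀ n, ContDiff ℝ (⊤ : ℕ∞) (P n))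
    -- the P-DRLM2 scheme (in the absence of the external force)
    (hscheme : ∀ n, 1 ≤ n → n < N → PDRLM2 Ω ν τ θ
      (U (n-1)) (U n) (P (n-1)) (P n) (Q (n-1)) (Q n)
      (Uh (n+1)) (U (n+1)) (P (n+1)) (Q (n+1)) nrm) :
    ∀ n, 2 ≤ n → n < N →
      (3/2) * Ke Ω τ (U (n+1)) (P (n+1)) - (1/2) * Ke Ω τ (U n) (P n)
          + θ * ((3/2) * (Q (n+1)) ^ 2 - (1/2) * (Q n) ^ 2 - 1)
        ≤ (3/2) * Ke Ω τ (U n) (P n) - (1/2) * Ke Ω τ (U (n-1)) (P (n-1))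
          + θ * ((3/2) * (Q n) ^ 2 - (1/2) * (Q (n-1)) ^ 2 - 1) := by
  intro n hn hnN
  obtain ⟨hmom, hbd, -, -, -, hen⟩ := hscheme n (by omega) hnN
  have hcUh := (hsUh (n + 1)).continuous
  have hcU := (hsU n).continuous
  have hcUm := (hsU (n - 1)).continuous
  have hext : ContDiff ℝ (⊤ : ℕ∞) fun y => (2 : ℝ) • U n y - U (n - 1) y :=
    ((hsU n).const_smul 2).sub (hsU (n - 1))
  have hconv := continuous_conv hext hext
  have hgrd := continuous_grd (hsP n)
  have hrhs : ipL2 Ω (fun x => (1/(2*τ)) • ((3:ℝ) • Uh (n+1) x - (4:ℝ) • U n x + U (n-1) x))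
        (Uh (n+1))
      + (Q (n+1) * triB Ω (fun y => (2:ℝ) • U n y - U (n-1) y)
          (fun y => (2:ℝ) • U n y - U (n-1) y) (Uh (n+1)) + ipGrad Ω (P n) (Uh (n+1)))
      = ν * ∫ x in Ω, ⟪vlap (Uh (n+1)) x, Uh (n+1) x⟫ := by
    unfold ipL2 triB ipGrad
    rw [← integral_const_mul, ← integral_const_mul, ← integral_add, ← integral_add]
    · refine setIntegral_congr_fun hΩo.measurableSet fun x hx => ?_
      simp only
      rw [← real_inner_smul_left, ← real_inner_smul_left, ← inner_add_left, ← inner_add_left]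
      congr 1
      rw [← sub_eq_zero, ← hmom x hx]
      abel
    all_goals
      refine Continuous.integrableOn_of_isBounded hΩb ?_
      fun_prop
  have hneg := mul_nonpos_of_nonneg_of_nonpos hν.1.le
    (setIntegral_inner_vlap_nonpos hΩo hΩb (hsUh (n + 1)) hbd)
  rw [← hrhs, ← hen, ← add_div, div_nonpos_iff] at hneg
  rcases hneg with h | h <;> linarith [h.1, h.2]
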